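/- arXiv:1508.04484 — 6 statements merged into one kernel-verified Lean document; each statement's English description precedes it below -/
import Mathlib

section
/- If k ≤ n < 2k, then for every position x of Exact k-Nim Nim^=_{n,k}, the Sprague–Grundy value of x equals its Tetris value: G(x) = T_{n,k}(x). -/
/-- A move in Exact k-Nim `Nim^=_{n,k}`: all piles weakly decrease and
exactly `k` piles strictly decrease. -/
def ExactMove (n k : ℕ) (x x' : Fin n → ℕ) : Prop :=
  (∀ i, x' i ≤ x i) ∧ (Finset.univ.filter fun i => x' i < x i).card = k

/-- There is a chain of `m` consecutive moves starting at `x`. -/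
def HasChain (n k : ℕ) (x : Fin n → ℕ) (m : ℕ) : Prop :=
  ∃ f : Fin (m + 1) → Fin n → ℕ, f 0 = x ∧
    ∀ i : Fin m, ExactMove n k (f i.castSucc) (f i.succ)

/-- The Tetris function `T_{n,k}(x)`: the maximum number of consecutive moves
that can be made starting from `x`. -/
noncomputable def tetris (n k : ℕ) (x : Fin n → ℕ) : ℕ :=
  sSup {m | HasChain n k x m}

/-- The Sprague–Grundy function of Exact k-Nim, defined by the mex recursion
`G(x) = mex {G(x') : x → x'}`.  (For `k ≥ 1` every move satisfies `x' ≠ x`, so the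
extra hypothesis `x' ≠ x`, needed for well-foundedness, is automatic.) -/
noncomputable def grundy (n k : ℕ) (x : Fin n → ℕ) : ℕ :=
  sInf {g : ℕ | ∀ x' : Fin n → ℕ, ExactMove n k x x' → x' ≠ x → grundy n k x' ≠ g}
termination_by ∑ i, x i
decreasing_by
  rename_i hmv hne
  have hle := hmv.1
  have hex : ∃ i, x' i < x i := by
    by_contra hc
    push_neg at hc
    exact hne (funext fun i => le_antisymm (hle i) (hc i))
  obtain ⟨i, hi⟩ := hex
  exact Finset.sum_lt_sum (fun j _ => hle j) ⟨i, Finset.mem_univ i, hi⟩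

/-!
A move uses up a step of any continuation, so no option of `x` has Tetris value `T x`. It remains to
reach every `s < T x`. Let `x → y` be a move with `s ≤ T y`. Emptying in `y` the `k` piles that were
moved leaves at most `n - k < k` nonempty piles, a position with `T = 0`. Going down to it from `y`
one token at a time, `T` drops by at most one at each step, so it takes the value `s` at some `w`;
and `x → w` is a move because it lowers the same `k` piles as `x → y`.
-/

theorem exists_eq_add_single {ι M : Type*} [DecidableEq ι] [AddCommMonoid M] [LE M]
    [ExistsAddOfLE M] {x : ι → M} {i : ι} {c : M} (h : c ≤ x i) :
    ∃ v : ι → M, x = v + Pi.single i c := by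
  obtain ⟨d, hd⟩ := exists_add_of_le h
  refine ⟨Function.update x i d, funext fun j => ?_⟩
  obtain rfl | hj := eq_or_ne j i
  · simp [hd, add_comm]
  · simp [hj]

theorem le_of_le_add_single {ι M : Type*} [DecidableEq ι] [AddZeroClass M] [LE M]
    {x y : ι → M} {i : ι} {c : M} (h : x ≤ y + Pi.single i c) (hi : x i ≤ y i) : x ≤ y :=
  fun j => by
    obtain rfl | hj := eq_or_ne j i
    · exact hi
    · simpa [hj] using h j

variable {n k m s : ℕ} {x y z w d : Fin n → ℕ}

theorem ExactMove.sum_add_le (h : ExactMove n k x y) : ∑ i, y i + k ≤ ∑ i, x i :=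
  calc
    ∑ i, y i + k = ∑ i, (y i + if y i < x i then 1 else 0) := by
      rw [Finset.sum_add_distrib, ← Finset.card_filter, h.2]
    _ ≤ ∑ i, x i := Finset.sum_le_sum fun i _ => by
      have := h.1 i
      split_ifs <;> omega

theorem exactMove_add_right_iff : ExactMove n k (x + d) (y + d) ↔ ExactMove n k x y := by
  simp only [ExactMove, Pi.add_apply, add_le_add_iff_right, add_lt_add_iff_right]

theorem ExactMove.of_le (h : ExactMove n k x y) (hwy : w ≤ y)
    (hw : ∀ i, y i = x i → w i = x i) : ExactMove n k x w := by
  have same_piles (i : Fin n) : w i < x i ↔ y i < x i :=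
    ⟨fun hlt => (h.1 i).lt_of_ne fun heq => hlt.ne (hw i heq), (hwy i).trans_lt⟩
  exact ⟨fun i => (hwy i).trans (h.1 i), by simpa only [same_piles] using h.2⟩

theorem hasChain_zero : HasChain n k x 0 :=
  ⟨fun _ => x, rfl, fun i => i.elim0⟩

theorem hasChain_succ_iff :
    HasChain n k x (m + 1) ↔ ∃ y, ExactMove n k x y ∧ HasChain n k y m := by
  constructor
  · rintro ⟨f, rfl, hf⟩
    exact ⟨f 1, hf 0, fun i => f i.succ, rfl, fun i => hf i.succ⟩
  · rintro ⟨_, hxy, f, rfl, hf⟩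
    exact ⟨Fin.cons x f, rfl, Fin.cases hxy hf⟩

namespace HasChain

theorem mul_le_sum (h : HasChain n k x m) : m * k ≤ ∑ i, x i := by
  induction m generalizing x with
  | zero => simp only [zero_mul, zero_le]
  | succ m ih =>
    obtain ⟨y, hxy, hy⟩ := hasChain_succ_iff.1 h
    calc
      (m + 1) * k = m * k + k := Nat.succ_mul m k
      _ ≤ ∑ i, y i + k := Nat.add_le_add_right (ih hy) k
      _ ≤ ∑ i, x i := hxy.sum_add_le

theorem of_succ (h : HasChain n k x (m + 1)) : HasChain n k x m := by
  obtain ⟨f, hf0, hf⟩ := h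
  exact ⟨fun i => f i.castSucc, hf0, fun i => hf i.castSucc⟩

theorem of_length_le {l : ℕ} (hlm : l ≤ m) (h : HasChain n k x m) : HasChain n k x l :=
  Nat.decreasingInduction' (fun _ _ _ => of_succ) hlm h

theorem add_right (d : Fin n → ℕ) (h : HasChain n k x m) : HasChain n k (x + d) m := by
  obtain ⟨f, rfl, hf⟩ := h
  exact ⟨fun i => f i + d, rfl, fun i => exactMove_add_right_iff.2 (hf i)⟩

theorem mono (hxy : x ≤ y) (h : HasChain n k x m) : HasChain n k y m := by
  obtain ⟨d, rfl⟩ := exists_add_of_le hxy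
  exact h.add_right d

theorem of_add_single {i : Fin n} (h : HasChain n k (x + Pi.single i 1) (m + 1)) :
    HasChain n k x m := by
  induction m generalizing x with
  | zero => exact hasChain_zero
  | succ m ih =>
    obtain ⟨y, hxy, hy⟩ := hasChain_succ_iff.1 h
    by_cases hi : y i ≤ x i
    · exact hy.mono (le_of_le_add_single hxy.1 hi)
    · obtain ⟨y, rfl⟩ := exists_eq_add_single (Nat.one_le_of_lt (not_le.1 hi))
      exact hasChain_succ_iff.2 ⟨y, exactMove_add_right_iff.1 hxy, ih hy⟩

end HasChain

theorem le_tetris_iff (hk : 0 < k) : m ≤ tetris n k x ↔ HasChain n k x m := by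
  have hbdd : BddAbove {m | HasChain n k x m} :=
    ⟨∑ i, x i, fun m hm => (Nat.le_mul_of_pos_right m hk).trans hm.mul_le_sum⟩
  have hmax : HasChain n k x (tetris n k x) := Nat.sSup_mem ⟨0, hasChain_zero⟩ hbdd
  exact ⟨fun hm => hmax.of_length_le hm, fun h => le_csSup hbdd h⟩

theorem lt_tetris_iff (hk : 0 < k) :
    m < tetris n k x ↔ ∃ y, ExactMove n k x y ∧ m ≤ tetris n k y := by
  simp only [← Nat.succ_le_iff, le_tetris_iff hk, hasChain_succ_iff]

theorem ExactMove.tetris_lt (hk : 0 < k) (h : ExactMove n k x y) :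
    tetris n k y < tetris n k x :=
  (lt_tetris_iff hk).2 ⟨y, h, le_rfl⟩

theorem tetris_add_single_le (hk : 0 < k) (i : Fin n) :
    tetris n k (x + Pi.single i 1) ≤ tetris n k x + 1 :=
  le_of_not_gt fun hlt =>
    (Nat.lt_succ_self _).not_ge <| (le_tetris_iff hk).2 ((le_tetris_iff hk).1 hlt).of_add_single

theorem tetris_eq_zero_of_card_lt (h : (Finset.univ.filter fun i => 0 < x i).card < k) :
    tetris n k x = 0 := by
  by_contra hpos
  obtain ⟨y, hxy, -⟩ := (lt_tetris_iff (by omega)).1 (Nat.pos_of_ne_zero hpos)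
  have hsub : (Finset.univ.filter fun i => y i < x i) ⊆ Finset.univ.filter fun i => 0 < x i :=
    Finset.monotone_filter_right _ fun _ _ hi => Nat.zero_lt_of_lt hi
  exact h.not_ge (hxy.2.ge.trans (Finset.card_le_card hsub))

theorem Icc_tetris_subset_image_Icc (hk : 0 < k) (hzy : z ≤ y) :
    Set.Icc (tetris n k z) (tetris n k y) ⊆ tetris n k '' Set.Icc z y := by
  rintro s ⟨hz, hy⟩
  induction y using WellFoundedLT.induction with
  | ind y ih =>
    obtain rfl | hlt := hy.eq_or_lt
    · exact ⟨y, ⟨hzy, le_rfl⟩, rfl⟩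
    have hne : z ≠ y := fun h => hlt.not_ge (h ▸ hz)
    obtain ⟨-, i, hi⟩ := Pi.lt_def.1 (hzy.lt_of_ne hne)
    obtain ⟨v, rfl⟩ := exists_eq_add_single (Nat.one_le_of_lt hi)
    have hzv : z ≤ v := le_of_le_add_single hzy (by simpa [Nat.lt_succ_iff] using hi)
    have hv : v < v + Pi.single i 1 := by simp
    have hsv : s ≤ tetris n k v := Nat.le_of_lt_succ (hlt.trans_le (tetris_add_single_le hk i))
    obtain ⟨w, ⟨hzw, hwv⟩, hw⟩ := ih v hv hzv hsv
    exact ⟨w, ⟨hzw, hwv.trans hv.le⟩, hw⟩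

theorem exists_exactMove_tetris_eq (hn : n < 2 * k) (hs : s < tetris n k x) :
    ∃ w, ExactMove n k x w ∧ tetris n k w = s := by
  have hk : 0 < k := by omega
  obtain ⟨y, hxy, hsy⟩ := (lt_tetris_iff hk).1 hs
  let z : Fin n → ℕ := fun i => if y i < x i then 0 else y i
  have hzy : z ≤ y := fun i => by
    dsimp only [z]
    split_ifs <;> omega
  have hz : tetris n k z = 0 := tetris_eq_zero_of_card_lt <|
    calc
      (Finset.univ.filter fun i => 0 < z i).card
        ≤ (Finset.univ.filter fun i => ¬ y i < x i).card :=
          Finset.card_le_card <| Finset.monotone_filter_right _ fun i _ hi hlt => by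
            simp [z, hlt] at hi
      _ < k := by
        have hsplit := Finset.card_filter_add_card_filter_not
          (s := Finset.univ) (fun i => y i < x i)
        rw [hxy.2, Finset.card_fin] at hsplit
        omega
  obtain ⟨w, ⟨hzw, hwy⟩, hw⟩ :=
    Icc_tetris_subset_image_Icc hk hzy ⟨hz.trans_le s.zero_le, hsy⟩
  have unmoved (i : Fin n) (hi : y i = x i) : w i = x i :=
    le_antisymm ((hwy i).trans hi.le) (by simpa [z, hi] using hzw i)
  exact ⟨w, hxy.of_le hwy unmoved, hw⟩

theorem grundy_eq_of_mex {f : (Fin n → ℕ) → ℕ}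
    (hne : ∀ x y, ExactMove n k x y → y ≠ x → f y ≠ f x)
    (hex : ∀ x, ∀ s < f x, ∃ y, ExactMove n k x y ∧ f y = s) (x : Fin n → ℕ) :
    grundy n k x = f x := by
  induction x using WellFoundedLT.induction with
  | ind x ih =>
    have ih' (y : Fin n → ℕ) (hxy : ExactMove n k x y) (hyx : y ≠ x) : grundy n k y = f y :=
      ih y (lt_of_le_of_ne hxy.1 hyx)
    rw [grundy]
    refine IsLeast.csInf_eq ⟨fun y hxy hyx => ih' y hxy hyx ▸ hne x y hxy hyx, fun s hs => ?_⟩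
    by_contra! hlt
    obtain ⟨y, hxy, rfl⟩ := hex x s hlt
    have hyx : y ≠ x := fun h => hlt.ne (congrArg f h)
    exact hs y hxy hyx (ih' y hxy hyx)

/-- If `k ≤ n < 2k`, the Sprague–Grundy function of Exact k-Nim equals its
Tetris function. -/
theorem grundy_eq_tetris_of_n_lt_two_mul_k (n k : ℕ) (hkn : k ≤ n) (hn : n < 2 * k)
    (x : Fin n → ℕ) : grundy n k x = tetris n k x :=
  grundy_eq_of_mex (fun _ _ h _ => (h.tetris_lt (by omega)).ne)
    (fun _ _ => exists_exactMove_tetris_eq hn) x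
end

section
/- Let k ≥ 2 and let x = (x_1, …, x_{2k}) be a nondecreasing position (x_1 ≤ x_2 ≤ ⋯ ≤ x_{2k}) of Nim^=_{2k,k}. Then x is a P-position (i.e., G(x) = 0) if and only if x_1 = x_2 = ⋯ = x_k = x_{k+1}. -/
/-!
The positions of `Nim^=_{2k,k}` with more than `k` minimal piles form the kernel of the move graph.
A move from such a position shrinks some minimal pile, by the pigeonhole principle; the new minimum
lies below the old one and is attained only at shrunk piles, of which there are `k`. Conversely, if
at most `k` piles are minimal, then `k` of the others can be lowered to the minimum in one move.
-/

section Grundy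

variable {n k : ℕ}

lemma exists_forall_exactMove_grundy_ne (x : Fin n → ℕ) :
    ∃ g, ∀ x', ExactMove n k x x' → x' ≠ x → grundy n k x' ≠ g := by
  obtain ⟨g, hg⟩ := ((Set.finite_Iic x).image (grundy n k)).exists_notMem
  exact ⟨g, fun x' hmove _ hx' => hg ⟨x', hmove.1, hx'⟩⟩

lemma grundy_eq_zero_iff_forall_exactMove {x : Fin n → ℕ} :
    grundy n k x = 0 ↔ ∀ x', ExactMove n k x x' → x' ≠ x → grundy n k x' ≠ 0 := by
  rw [grundy, Nat.sInf_eq_zero]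
  exact or_iff_left (Set.Nonempty.ne_empty (exists_forall_exactMove_grundy_ne x))

theorem grundy_eq_zero_iff_of_independent_of_absorbing {P : (Fin n → ℕ) → Prop}
    (independent : ∀ x x', P x → ExactMove n k x x' → ¬ P x')
    (absorbing : ∀ x, ¬ P x → ∃ x', ExactMove n k x x' ∧ P x') {x : Fin n → ℕ} :
    grundy n k x = 0 ↔ P x := by
  induction x using WellFoundedLT.induction with
  | ind x ih =>
    have ih_move {x' : Fin n → ℕ} (hmove : ExactMove n k x x') (hne : x' ≠ x) :
        grundy n k x' = 0 ↔ P x' :=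
      ih x' (lt_of_le_of_ne hmove.1 hne)
    rw [grundy_eq_zero_iff_forall_exactMove]
    constructor
    · intro hgrundy
      by_contra hx
      obtain ⟨x', hmove, hx'⟩ := absorbing x hx
      have hne : x' ≠ x := fun h => hx (h ▸ hx')
      exact hgrundy x' hmove hne ((ih_move hmove hne).2 hx')
    · exact fun hx x' hmove hne hzero => independent x x' hx hmove ((ih_move hmove hne).1 hzero)

end Grundy

open Finset

section Minimizers

variable {ι α : Type*} [Fintype ι]

/-- The indices at which a family attains its minimum; for a Nim position, its smallest piles. -/
def minimizers [LE α] [DecidableLE α] (x : ι → α) : Finset ι := {i | ∀ j, x i ≤ x j}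

lemma mem_minimizers [LE α] [DecidableLE α] {x : ι → α} {i : ι} :
    i ∈ minimizers x ↔ ∀ j, x i ≤ x j := by
  simp only [minimizers, mem_filter_univ]

lemma minimizers_nonempty [Nonempty ι] [LinearOrder α] (x : ι → α) : (minimizers x).Nonempty := by
  obtain ⟨i, hi⟩ := Finite.exists_min x
  exact ⟨i, mem_minimizers.2 hi⟩

lemma minimizers_subset_filter_lt [Preorder α] [DecidableLE α] [DecidableLT α] {x x' : ι → α}
    {i : ι} (hi : i ∈ minimizers x) (hlt : x' i < x i) :
    minimizers x' ⊆ ({j | x' j < x j} : Finset ι) := by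
  intro j hj
  rw [mem_filter_univ]
  calc x' j ≤ x' i := mem_minimizers.1 hj i
    _ < x i := hlt
    _ ≤ x j := mem_minimizers.1 hi j

lemma minimizers_union_subset_minimizers_piecewise [DecidableEq ι] [Preorder α] [DecidableLE α]
    {x : ι → α} {i : ι} (hi : i ∈ minimizers x) (t : Finset ι) :
    minimizers x ∪ t ⊆ minimizers (t.piecewise (fun _ => x i) x) := by
  have hmin : ∀ j, x i ≤ t.piecewise (fun _ => x i) x j :=
    t.le_piecewise_of_le_of_le (fun _ => le_rfl) (mem_minimizers.1 hi)
  intro j hj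
  refine mem_minimizers.2 fun l => le_trans ?_ (hmin l)
  by_cases hjt : j ∈ t
  · rw [t.piecewise_eq_of_mem _ _ hjt]
  · rw [t.piecewise_eq_of_notMem _ _ hjt]
    have hjx : j ∈ minimizers x := (mem_union.1 hj).resolve_right hjt
    exact mem_minimizers.1 hjx i

lemma isLowerSet_minimizers [Preorder ι] [Preorder α] [DecidableLE α] {x : ι → α}
    (hx : Monotone x) : IsLowerSet (minimizers x : Set ι) :=
  fun _ _ hle hmem => mem_minimizers.2 fun l => (hx hle).trans (mem_minimizers.1 hmem l)

lemma mem_minimizers_iff_of_monotone [SemilatticeInf ι] [PartialOrder α] [DecidableLE α]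
    {x : ι → α} (hx : Monotone x) {i : ι} :
    i ∈ minimizers x ↔ ∀ a b, a ≤ i → b ≤ i → x a = x b := by
  constructor
  · intro hi a b ha hb
    have hlow := isLowerSet_minimizers hx
    exact le_antisymm (mem_minimizers.1 (hlow ha hi) b) (mem_minimizers.1 (hlow hb hi) a)
  · intro heq
    refine mem_minimizers.2 fun j => ?_
    calc x i = x (i ⊓ j) := heq _ _ le_rfl inf_le_left
      _ ≤ x j := hx inf_le_right

end Minimizers

lemma lt_card_iff_mem_of_isLowerSet {n : ℕ} {s : Finset (Fin n)}
    (hs : IsLowerSet (s : Set (Fin n))) {i : Fin n} : (i : ℕ) < #s ↔ i ∈ s := by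
  constructor
  · contrapose!
    intro hi
    have hsub : s ⊆ Iio i := fun j hj => mem_Iio.2 (lt_of_not_ge fun hij => hi (hs hij hj))
    exact (card_le_card hsub).trans_eq (Fin.card_Iio i)
  · intro hi
    have hsub : Iic i ⊆ s := fun j hj => hs (mem_Iic.1 hj) hi
    exact Nat.lt_of_succ_le ((Fin.card_Iic i).symm.trans_le (card_le_card hsub))

section ExactNim

variable {n k : ℕ} {x x' : Fin n → ℕ}

lemma exactMove_piecewise {t : Finset (Fin n)} {y : Fin n → ℕ} (hlt : ∀ i ∈ t, y i < x i) :
    ExactMove n #t x (t.piecewise y x) := by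
  have hiff : ∀ i, t.piecewise y x i < x i ↔ i ∈ t := by
    intro i
    by_cases hi : i ∈ t
    · simp only [piecewise_eq_of_mem, hi, hlt i hi]
    · simp only [piecewise_eq_of_notMem _ _ _ hi, hi, lt_irrefl]
  constructor
  · have hle : t.piecewise y x ≤ t.piecewise x x :=
      piecewise_le_piecewise' t (fun i hi => (hlt i hi).le) (fun _ _ => le_rfl)
    exact hle.trans_eq (t.piecewise_same x)
  · simp only [hiff, filter_univ_mem]

lemma ExactMove.exists_minimizer_lt (hmove : ExactMove n k x x') (hx : n < k + #(minimizers x)) :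
    ∃ i ∈ minimizers x, x' i < x i := by
  have hcard : #(univ : Finset (Fin n)) < #(minimizers x) + #{i | x' i < x i} := by
    rw [card_univ, Fintype.card_fin, hmove.2]
    omega
  obtain ⟨i, hi⟩ := inter_nonempty_of_card_lt_card_add_card (subset_univ _) (subset_univ _) hcard
  exact ⟨i, (mem_inter.1 hi).1, (mem_filter.1 (mem_inter.1 hi).2).2⟩

theorem ExactMove.card_minimizers_le (hmove : ExactMove n k x x')
    (hx : n < k + #(minimizers x)) : #(minimizers x') ≤ k := by
  obtain ⟨i, hi, hlt⟩ := hmove.exists_minimizer_lt hx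
  exact (card_le_card (minimizers_subset_filter_lt hi hlt)).trans_eq hmove.2

theorem exists_exactMove_lt_card_minimizers (hk : 0 < k) (hx : k + #(minimizers x) ≤ n) :
    ∃ x', ExactMove n k x x' ∧ k < #(minimizers x') := by
  have : NeZero n := ⟨by omega⟩
  have hcompl : k ≤ #(minimizers x)ᶜ := by
    rw [card_compl, Fintype.card_fin]
    omega
  obtain ⟨t, ht, rfl⟩ := exists_subset_card_eq hcompl
  obtain ⟨i, hi⟩ := minimizers_nonempty x
  have hdisj : Disjoint (minimizers x) t := disjoint_right.2 fun j hj => mem_compl.1 (ht hj)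
  have hlt : ∀ j ∈ t, x i < x j := fun j hj =>
    lt_of_not_ge fun hji => mem_compl.1 (ht hj) <|
      mem_minimizers.2 fun l => hji.trans (mem_minimizers.1 hi l)
  refine ⟨t.piecewise (fun _ => x i) x, exactMove_piecewise hlt, ?_⟩
  calc #t < #(minimizers x) + #t := Nat.lt_add_of_pos_left (card_pos.2 ⟨i, hi⟩)
    _ = #(minimizers x ∪ t) := (card_union_of_disjoint hdisj).symm
    _ ≤ #(minimizers (t.piecewise (fun _ => x i) x)) :=
      card_le_card (minimizers_union_subset_minimizers_piecewise hi t)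

end ExactNim

theorem grundy_eq_zero_iff_general {k : ℕ} (hk : 0 < k) (x : Fin (2 * k) → ℕ) :
    grundy (2 * k) k x = 0 ↔ k < #(minimizers x) := by
  refine grundy_eq_zero_iff_of_independent_of_absorbing (P := fun x => k < #(minimizers x)) ?_ ?_
  · intro x x' hx hmove
    exact (hmove.card_minimizers_le (by omega)).not_gt
  · intro x hx
    exact exists_exactMove_lt_card_minimizers hk (by omega)

/-- For `k ≥ 2`, a nondecreasing position `x` of `Nim^=_{2k,k}` is a P-position
iff its `k+1` smallest coordinates are all equal: `x₁ = ⋯ = x_k = x_{k+1}`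
(indices `0, …, k` in 0-based notation). -/
theorem grundy_eq_zero_iff (k : ℕ) (hk : 2 ≤ k) (x : Fin (2 * k) → ℕ)
    (hmono : Monotone x) :
    grundy (2 * k) k x = 0 ↔
      ∀ i j : Fin (2 * k), (i : ℕ) ≤ k → (j : ℕ) ≤ k → x i = x j := by
  rw [grundy_eq_zero_iff_general (by omega) x]
  exact (lt_card_iff_mem_of_isLowerSet (i := ⟨k, by omega⟩) (isLowerSet_minimizers hmono)).trans
    (mem_minimizers_iff_of_monotone hmono)
end

section
/- Let k ≥ 2 and let x = (x_1, …, x_{2k}) be a nondecreasing position (x_1 ≤ x_2 ≤ ⋯ ≤ x_{2k}) of Nim^=_{2k,k}. Then G(x) = 1 if and only if there exist an integer c ≥ 0 and ℓ ∈ {0, 1, …, k−1} such that x_1 = ⋯ = x_{k−ℓ} = 2c and x_{k−ℓ+1} = ⋯ = x_{k+ℓ+1} = 2c+1. -/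
/-!
The positions of values `0` and `1` are identified by counting, without sorting the piles.
With `2k` piles, `k` of which move, the value is `0` exactly when the minimum is attained by more
than `k` piles. The value is `1` exactly when, for some `c`, no pile is below `2c`, at most `k` piles
equal `2c`, and the piles at most `2c` together with those at most `2c + 1` number more than `2k` in
total. No move joins two positions of the same kind: if `v` lies below every pile, one move brings at
most `k` piles down to `v`, and two sets of piles with more than `2k` members in total overlap.
Conversely, from a position not of the first kind one lowers `k` large piles to the minimum, and if
it is not of the second kind either, one lowers `k` large piles to `2c` and `2c + 1`, where `c` is
half the minimum, rounded down.
-/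

section

open Finset

variable {n k : ℕ} {x x' : Fin n → ℕ}

theorem ExactMove.lt (hk : 0 < k) (h : ExactMove n k x x') : x' < x := by
  obtain ⟨i, hi⟩ := card_pos.mp (h.2 ▸ hk)
  exact Pi.lt_def.mpr ⟨h.1, i, (mem_filter.mp hi).2⟩

theorem grundy_ne_of_exactMove (hk : 0 < k) (h : ExactMove n k x x') :
    grundy n k x' ≠ grundy n k x := by
  have hvalues : (grundy n k '' Set.Iic x).Finite := (Set.finite_Iic x).image _
  obtain ⟨g, hg⟩ := hvalues.exists_notMem
  have hmem := Nat.sInf_mem (s := {g | ∀ x', ExactMove n k x x' → x' ≠ x → grundy n k x' ≠ g})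
    ⟨g, fun y hy _ hyg => hg ⟨y, hy.1, hyg⟩⟩
  rw [grundy.eq_def n k x]
  exact hmem x' h (h.lt hk).ne

theorem exists_exactMove_of_lt_grundy {g : ℕ} (hg : g < grundy n k x) :
    ∃ x', ExactMove n k x x' ∧ grundy n k x' = g := by
  rw [grundy] at hg
  have hnot := Nat.notMem_of_lt_sInf hg
  simp only [Set.mem_ofPred_eq, not_forall, not_not] at hnot
  obtain ⟨x', hmove, -, hx'⟩ := hnot
  exact ⟨x', hmove, hx'⟩

-- A set of positions is the level set `{grundy = g}` once it is a kernel of the game restricted to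
-- the positions of value at least `g`.
theorem grundy_eq_iff_of_kernel (hk : 0 < k) {g : ℕ} {K : (Fin n → ℕ) → Prop}
    (hge : ∀ x, K x → g ≤ grundy n k x)
    (hindep : ∀ x x', ExactMove n k x x' → K x → ¬ K x')
    (habsorb : ∀ x, g ≤ grundy n k x → ¬ K x → ∃ x', ExactMove n k x x' ∧ K x')
    (x : Fin n → ℕ) : grundy n k x = g ↔ K x := by
  induction x using WellFoundedLT.induction with
  | ind x ih =>
    constructor
    · intro hx
      by_contra hK
      obtain ⟨x', hmove, hx'⟩ := habsorb x hx.ge hK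
      have hg : grundy n k x' = g := (ih x' (hmove.lt hk)).mpr hx'
      exact grundy_ne_of_exactMove hk hmove (hg.trans hx.symm)
    · intro hK
      by_contra hx
      obtain ⟨x', hmove, hx'⟩ := exists_exactMove_of_lt_grundy ((hge x hK).lt_of_ne' hx)
      exact hindep x x' hmove hK ((ih x' (hmove.lt hk)).mp hx')

theorem ExactMove.card_le_of_forall_lt (h : ExactMove n k x x') {v : ℕ} (hv : ∀ i, v < x i) :
    #{i | x' i ≤ v} ≤ k := by
  rw [← h.2]
  exact card_le_card (monotone_filter_right _ fun i _ hi => hi.trans_lt (hv i))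

theorem exactMove_piecewise_s3 {S : Finset (Fin n)} {y : Fin n → ℕ} (hS : #S = k)
    (hy : ∀ i ∈ S, y i < x i) : ExactMove n k x (S.piecewise y x) := by
  have hmoved : ({i | S.piecewise y x i < x i} : Finset (Fin n)) = S := by
    ext i
    by_cases hi : i ∈ S <;> simp [hi, hy]
  refine ⟨fun i => ?_, by rw [hmoved, hS]⟩
  by_cases hi : i ∈ S
  · simpa [hi] using (hy i hi).le
  · simp [hi]

theorem exists_apply_le_of_lt_card_add_card {v w : ℕ}
    (h : n < #{i | x i ≤ v} + #{i | x i ≤ w}) : ∃ i, x i ≤ v := by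
  have hw := card_le_univ ({i | x i ≤ w} : Finset (Fin n))
  rw [Fintype.card_fin] at hw
  obtain ⟨i, hi⟩ := card_pos.mp (by omega : 0 < #{i | x i ≤ v})
  exact ⟨i, (mem_filter.mp hi).2⟩

end

section

open Finset

variable {k : ℕ} {x x' : Fin (2 * k) → ℕ}

/-- The positions of Grundy value `0` in `Nim^=_{2k,k}`: the minimal pile size `m` occurs more than
`k` times. -/
def IsZeroPosition (x : Fin (2 * k) → ℕ) : Prop :=
  ∃ m, (∀ i, m ≤ x i) ∧ k < #{i | x i ≤ m}

/-- The positions of Grundy value `1` in `Nim^=_{2k,k}`. If `a` piles equal `2c` and `b` piles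
equal `2c + 1`, the last condition says `2k < 2a + b`; in particular it forces `0 < a`. -/
def IsOnePosition (x : Fin (2 * k) → ℕ) : Prop :=
  ∃ c, (∀ i, 2 * c ≤ x i) ∧ #{i | x i ≤ 2 * c} ≤ k ∧
    2 * k < #{i | x i ≤ 2 * c} + #{i | x i ≤ 2 * c + 1}

theorem IsZeroPosition.not_of_exactMove (hx : IsZeroPosition x)
    (h : ExactMove (2 * k) k x x') : ¬ IsZeroPosition x' := by
  rintro ⟨m', hmin', hcard'⟩
  obtain ⟨m, hmin, hcard⟩ := hx
  have hmm' : m ≤ m' := by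
    by_contra! hlt
    exact hcard'.not_ge (h.card_le_of_forall_lt fun i => hlt.trans_le (hmin i))
  have hmoved := h.2
  obtain ⟨i, hi⟩ := inter_nonempty_of_card_lt_card_add_card
    (subset_univ {i | x i ≤ m}) (subset_univ {i | x' i < x i})
    (by rw [card_univ, Fintype.card_fin]; omega)
  simp only [mem_inter, mem_filter_univ] at hi
  have := hmin' i
  omega

theorem IsOnePosition.not_of_exactMove (hx : IsOnePosition x)
    (h : ExactMove (2 * k) k x x') : ¬ IsOnePosition x' := by
  rintro ⟨c', hmin', hk', hcard'⟩
  obtain ⟨c, hmin, -, hcard⟩ := hx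
  obtain ⟨i, hi⟩ := exists_apply_le_of_lt_card_add_card hcard
  have hc'c : c' ≤ c := by
    have := (hmin' i).trans (h.1 i)
    omega
  have hcc' : c ≤ c' := by
    by_contra! hlt
    have hlow : #{i | x' i ≤ 2 * c' + 1} ≤ k :=
      h.card_le_of_forall_lt fun i => (by omega : 2 * c' + 1 < 2 * c).trans_le (hmin i)
    omega
  obtain rfl : c = c' := hcc'.antisymm hc'c
  let A : Finset (Fin (2 * k)) := {i | x i ≤ 2 * c}
  let L : Finset (Fin (2 * k)) := {i | x i ≤ 2 * c + 1}
  let M : Finset (Fin (2 * k)) := {i | x' i < x i}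
  have hdisj : Disjoint A (L ∩ M) := by
    simp only [disjoint_left, A, L, M, mem_inter, mem_filter_univ]
    intro i hA hLM
    have := hmin' i
    omega
  have hsub : A ∪ L ∩ M ⊆ ({i | x' i ≤ 2 * c} : Finset _) := by
    simp only [subset_iff, A, L, M, mem_union, mem_inter, mem_filter_univ]
    intro i hi
    have := h.1 i
    omega
  have hle : #A + #(L ∩ M) ≤ k := by
    rw [← card_union_of_disjoint hdisj]
    exact (card_le_card hsub).trans hk'
  have hLM : #L + #M ≤ 2 * k + #(L ∩ M) := by
    rw [← card_union_add_card_inter]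
    exact Nat.add_le_add_right ((card_le_univ _).trans_eq (Fintype.card_fin _)) _
  have hM : #M = k := h.2
  have hAL : 2 * k < #A + #L := hcard
  omega

theorem IsZeroPosition.not_isOnePosition (hx : IsZeroPosition x) : ¬ IsOnePosition x := by
  rintro ⟨c, -, hk, hcard⟩
  obtain ⟨m, hmin, hm⟩ := hx
  obtain ⟨i, hi⟩ := exists_apply_le_of_lt_card_add_card hcard
  have hmc : m ≤ 2 * c := (hmin i).trans hi
  exact hm.not_ge ((card_le_card (monotone_filter_right _ fun _ _ h => h.trans hmc)).trans hk)

theorem exists_min_card_le_of_not_isZeroPosition (hk : 0 < k) (hx : ¬ IsZeroPosition x) :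
    ∃ i₀, (∀ i, x i₀ ≤ x i) ∧ #{i | x i ≤ x i₀} ≤ k := by
  have : Nonempty (Fin (2 * k)) := ⟨⟨0, by omega⟩⟩
  obtain ⟨i₀, hmin⟩ := Finite.exists_min x
  exact ⟨i₀, hmin, not_lt.mp fun hlt => hx ⟨x i₀, hmin, hlt⟩⟩

theorem exists_exactMove_isZeroPosition (hk : 0 < k) (hx : ¬ IsZeroPosition x) :
    ∃ x', ExactMove (2 * k) k x x' ∧ IsZeroPosition x' := by
  obtain ⟨i₀, hmin, hcard⟩ := exists_min_card_le_of_not_isZeroPosition hk hx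
  obtain ⟨S, hS, hSk⟩ : ∃ S ⊆ ({i | x i ≤ x i₀} : Finset (Fin (2 * k)))ᶜ, #S = k :=
    exists_subset_card_eq (by rw [card_compl, Fintype.card_fin]; omega)
  have hlt : ∀ i ∈ S, x i₀ < x i := fun i hi => by simpa using hS hi
  have hi₀ : i₀ ∉ S := fun hi => (hlt i₀ hi).false
  refine ⟨S.piecewise (fun _ => x i₀) x, exactMove_piecewise_s3 hSk hlt, x i₀, fun i => ?_, ?_⟩
  · by_cases hi : i ∈ S <;> simp [hi, hmin]
  · refine (hSk.symm.trans_lt (card_lt_card (ssubset_insert hi₀))).trans_le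
      (card_le_card fun i hi => (mem_filter_univ i).mpr ?_)
    rcases mem_insert.mp hi with rfl | hiS
    · simp [hi₀]
    · simp [hiS]

theorem isOnePosition_piecewise {c : ℕ} {C S : Finset (Fin (2 * k))} {i₀ : Fin (2 * k)}
    (hmin : ∀ i, 2 * c ≤ x i) (hi₀ : x i₀ ≤ 2 * c + 1) (hi₀S : i₀ ∉ S) (hS : ∀ i ∈ S, 2 * c < x i)
    (hSk : #S = k) (hCS : C ⊆ S) (hC : #C = #{i | x i ≤ 2 * c}) :
    IsOnePosition (S.piecewise (C.piecewise (fun _ => 2 * c + 1) fun _ => 2 * c) x) := by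
  set x' := S.piecewise (C.piecewise (fun _ => 2 * c + 1) fun _ => 2 * c) x with hx'
  let A : Finset (Fin (2 * k)) := {i | x i ≤ 2 * c}
  have hA' : ({i | x' i ≤ 2 * c} : Finset _) = A ∪ S \ C := by
    ext i
    by_cases hiS : i ∈ S
    · by_cases hiC : i ∈ C <;> simp [hx', A, hiS, hiC, hS]
    · simp [hx', A, hiS]
  have hdisj : Disjoint A (S \ C) :=
    disjoint_left.mpr fun i hA hi => (mem_filter.mp hA).2.not_gt (hS i (mem_sdiff.mp hi).1)
  have hA'card : #{i | x' i ≤ 2 * c} = k := by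
    rw [hA', card_union_of_disjoint hdisj, ← hC, add_comm, card_sdiff_add_card_eq_card hCS, hSk]
  have hL'card : k < #{i | x' i ≤ 2 * c + 1} := by
    refine (hSk.symm.trans_lt (card_lt_card (ssubset_insert hi₀S))).trans_le
      (card_le_card fun i hi => (mem_filter_univ i).mpr ?_)
    rcases mem_insert.mp hi with rfl | hiS
    · simpa [hx', hi₀S] using hi₀
    · by_cases hiC : i ∈ C <;> simp [hx', hiS, hiC]
  refine ⟨c, fun i => ?_, hA'card.le, by omega⟩
  by_cases hiS : i ∈ S
  · by_cases hiC : i ∈ C <;> simp [hx', hiS, hiC]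
  · simpa [hx', hiS] using hmin i

theorem exists_exactMove_isOnePosition_of_card_le {c : ℕ} {i₀ : Fin (2 * k)}
    (hmin : ∀ i, 2 * c ≤ x i) (hi₀ : x i₀ ≤ 2 * c + 1)
    (hcard : #{i | x i ≤ 2 * c} + #{i | x i ≤ 2 * c + 1} ≤ 2 * k) :
    ∃ x', ExactMove (2 * k) k x x' ∧ IsOnePosition x' := by
  let A : Finset (Fin (2 * k)) := {i | x i ≤ 2 * c}
  let L : Finset (Fin (2 * k)) := {i | x i ≤ 2 * c + 1}
  have hAL : #A + #L ≤ 2 * k := hcard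
  have hsub : insert i₀ A ⊆ L := by
    simp only [subset_iff, A, L, mem_insert, mem_filter_univ]
    rintro i (rfl | hi) <;> omega
  have hinsert_le : #(insert i₀ A) ≤ #L := card_le_card hsub
  have hinsert_le_succ : #(insert i₀ A) ≤ #A + 1 := card_insert_le i₀ A
  have hA_le : #A ≤ #(insert i₀ A) := card_le_card (subset_insert i₀ A)
  -- The piles of `S` are lowered, those of `C` to `2c + 1` and the others to `2c`; with `#C = #A`
  -- exactly `k` piles end up equal to `2c`.
  obtain ⟨C, hCL, hCcard⟩ : ∃ C ⊆ Lᶜ, #C = #A :=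
    exists_subset_card_eq (by rw [card_compl, Fintype.card_fin]; omega)
  obtain ⟨S, hCS, hSA, hSk⟩ : ∃ S, C ⊆ S ∧ S ⊆ (insert i₀ A)ᶜ ∧ #S = k :=
    exists_subsuperset_card_eq (hCL.trans (compl_subset_compl.mpr hsub)) (by omega)
      (by rw [card_compl, Fintype.card_fin]; omega)
  have hC : ∀ i ∈ C, 2 * c + 1 < x i := fun i hi => by simpa [L] using hCL hi
  have hS : ∀ i ∈ S, i ≠ i₀ ∧ 2 * c < x i := fun i hi => by simpa [A] using hSA hi
  refine ⟨_, exactMove_piecewise_s3 hSk fun i hi => ?_, isOnePosition_piecewise hmin hi₀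
    (fun hi => (hS i₀ hi).1 rfl) (fun i hi => (hS i hi).2) hSk hCS hCcard⟩
  by_cases hiC : i ∈ C
  · simpa [hiC] using hC i hiC
  · simpa [hiC] using (hS i hi).2

theorem exists_exactMove_isOnePosition (hk : 0 < k) (hx₀ : ¬ IsZeroPosition x)
    (hx₁ : ¬ IsOnePosition x) : ∃ x', ExactMove (2 * k) k x x' ∧ IsOnePosition x' := by
  obtain ⟨i₀, hmin, hcard⟩ := exists_min_card_le_of_not_isZeroPosition hk hx₀
  let c := x i₀ / 2
  have hminc : ∀ i, 2 * c ≤ x i := fun i => (Nat.mul_div_le _ _).trans (hmin i)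
  refine exists_exactMove_isOnePosition_of_card_le (c := c) (i₀ := i₀) hminc (by omega) ?_
  by_contra! hlt
  refine hx₁ ⟨c, hminc, (card_le_card ?_).trans hcard, hlt⟩
  exact monotone_filter_right _ fun i _ hi => hi.trans (hminc i₀)

theorem grundy_eq_zero_iff_isZeroPosition (hk : 0 < k) (x : Fin (2 * k) → ℕ) :
    grundy (2 * k) k x = 0 ↔ IsZeroPosition x :=
  grundy_eq_iff_of_kernel hk (fun _ _ => Nat.zero_le _) (fun _ _ h hx => hx.not_of_exactMove h)
    (fun _ _ hx => exists_exactMove_isZeroPosition hk hx) x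

theorem grundy_eq_one_iff_isOnePosition (hk : 0 < k) (x : Fin (2 * k) → ℕ) :
    grundy (2 * k) k x = 1 ↔ IsOnePosition x := by
  have hzero (x : Fin (2 * k) → ℕ) : 1 ≤ grundy (2 * k) k x ↔ ¬ IsZeroPosition x := by
    rw [Nat.one_le_iff_ne_zero, Ne, grundy_eq_zero_iff_isZeroPosition hk]
  refine grundy_eq_iff_of_kernel hk ?_ (fun _ _ h hx => hx.not_of_exactMove h) ?_ x
  · exact fun x hx => (hzero x).mpr fun hx₀ => hx₀.not_isOnePosition hx
  · exact fun x hx => exists_exactMove_isOnePosition hk ((hzero x).mp hx)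

theorem isOnePosition_comp_perm (σ : Equiv.Perm (Fin (2 * k))) :
    IsOnePosition (x ∘ σ) ↔ IsOnePosition x := by
  have hcard (v : ℕ) : #{i | (x ∘ σ) i ≤ v} = #{i | x i ≤ v} := card_equiv σ (by simp)
  have hmin (v : ℕ) : (∀ i, v ≤ (x ∘ σ) i) ↔ ∀ i, v ≤ x i := σ.forall_congr_left.trans (by simp)
  simp only [IsOnePosition, hcard, hmin]

theorem isOnePosition_iff_of_monotone (hk : 0 < k) (hx : Monotone x) :
    IsOnePosition x ↔ ∃ c ℓ : ℕ, ℓ ≤ k - 1 ∧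
      (∀ i : Fin (2 * k), (i : ℕ) < k - ℓ → x i = 2 * c) ∧
      (∀ i : Fin (2 * k), k - ℓ ≤ (i : ℕ) → (i : ℕ) ≤ k + ℓ → x i = 2 * c + 1) := by
  have hlt (v : ℕ) (i : Fin (2 * k)) : (i : ℕ) < #{i | x i ≤ v} ↔ x i ≤ v :=
    Tuple.lt_card_le_iff_apply_le_of_monotone hx
  constructor
  · rintro ⟨c, hmin, hle, hcard⟩
    refine ⟨c, k - #{i | x i ≤ 2 * c}, ?_, fun i hi => ?_, fun i hi hi' => ?_⟩
    · obtain ⟨i, hi⟩ := exists_apply_le_of_lt_card_add_card hcard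
      have := (hlt _ i).mpr hi
      omega
    · have := (hlt (2 * c) i).mp (by omega)
      have := hmin i
      omega
    · have := (hlt (2 * c + 1) i).mp (by omega)
      have := mt (hlt (2 * c) i).mpr (by omega)
      omega
  · rintro ⟨c, ℓ, hℓ, heven, hodd⟩
    have hzero : x ⟨0, by omega⟩ = 2 * c := heven _ (by dsimp only; omega)
    have hmin (i : Fin (2 * k)) : 2 * c ≤ x i := hzero ▸ hx (Nat.zero_le i.val)
    have hA : #{i | x i ≤ 2 * c} ≤ k - ℓ := by
      have hval : x ⟨k - ℓ, by omega⟩ = 2 * c + 1 := hodd _ le_rfl (by dsimp only; omega)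
      exact not_lt.mp (mt (hlt _ ⟨k - ℓ, by omega⟩).mp (by omega))
    have hA' : k - ℓ - 1 < #{i | x i ≤ 2 * c} :=
      (hlt _ ⟨k - ℓ - 1, by omega⟩).mpr (heven _ (by dsimp only; omega)).le
    have hL : k + ℓ < #{i | x i ≤ 2 * c + 1} :=
      (hlt _ ⟨k + ℓ, by omega⟩).mpr (hodd _ (by dsimp only; omega) le_rfl).le
    exact ⟨c, hmin, by omega, by omega⟩

end

theorem grundy_eq_one_iff_general {k : ℕ} (hk : 0 < k) (x : Fin (2 * k) → ℕ)
    (σ : Equiv.Perm (Fin (2 * k))) (hσ : Monotone (x ∘ σ)) :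
    grundy (2 * k) k x = 1 ↔
      ∃ c ℓ : ℕ, ℓ ≤ k - 1 ∧
        (∀ i : Fin (2 * k), (i : ℕ) < k - ℓ → x (σ i) = 2 * c) ∧
        (∀ i : Fin (2 * k), k - ℓ ≤ (i : ℕ) → (i : ℕ) ≤ k + ℓ → x (σ i) = 2 * c + 1) := by
  rw [grundy_eq_one_iff_isOnePosition hk, ← isOnePosition_comp_perm σ,
    isOnePosition_iff_of_monotone hk hσ]
  rfl

/-- For `k ≥ 2`, a nondecreasing position `x` of `Nim^=_{2k,k}` has Sprague–Grundy
value `1` iff there are `c ≥ 0` and `ℓ ∈ {0, …, k-1}` with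
`x₁ = ⋯ = x_{k-ℓ} = 2c` and `x_{k-ℓ+1} = ⋯ = x_{k+ℓ+1} = 2c+1`
(in 0-based notation: `x i = 2c` for `i < k-ℓ` and `x i = 2c+1` for `k-ℓ ≤ i ≤ k+ℓ`). -/
theorem grundy_eq_one_iff (k : ℕ) (hk : 2 ≤ k) (x : Fin (2 * k) → ℕ)
    (hmono : Monotone x) :
    grundy (2 * k) k x = 1 ↔
      ∃ c ℓ : ℕ, ℓ ≤ k - 1 ∧
        (∀ i : Fin (2 * k), (i : ℕ) < k - ℓ → x i = 2 * c) ∧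
        (∀ i : Fin (2 * k), k - ℓ ≤ (i : ℕ) → (i : ℕ) ≤ k + ℓ → x i = 2 * c + 1) :=
  grundy_eq_one_iff_general (by omega) x (Equiv.refl _) hmono
end

section
/- Let k ≥ 2, n = 2k, and let x be a position of Nim^=_{2k,k}. Suppose x → x' and x → x'' are moves with x''_i ≤ x'_i for all i and y(x') ≥ y(x''). Then for every integer g with y(x'') ≤ g ≤ y(x') there exists a move x → x''' such that y(x''') = g and x''_i ≤ x'''_i ≤ x'_i for all i. -/
/-- `m(x)`: the minimum pile size of the position `x`. -/
noncomputable def mval (n : ℕ) (x : Fin n → ℕ) : ℕ := sInf (Set.range x)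

/-- `y(x) = T_{n,k}(x₁ - m(x), …, xₙ - m(x))`. -/
noncomputable def yval (n k : ℕ) (x : Fin n → ℕ) : ℕ :=
  tetris n k fun i => x i - mval n x

/-- `z(x) = 1 + C(y(x)+1, 2)`. -/
noncomputable def zval (n k : ℕ) (x : Fin n → ℕ) : ℕ :=
  1 + (yval n k x + 1).choose 2

/-!
Removing one token from one pile lowers `y` by at most one. If the removal lowers the minimum `m`,
then the position with `m` subtracted weakly increases, so `y` does not drop. Otherwise that
position loses a single token too, and this costs a chain of moves at most one of its moves: skip
the first move that touches the shortened pile, or the last move if there is none. Walking down from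
`x'` to `x''` one token at a time, `y` therefore takes every intermediate value, and every position
between the results of two moves from `x` is itself the result of a move from `x`.
-/

theorem exists_between_eq_of_covBy_le_succ {α β : Type*} [PartialOrder α] [IsStronglyCoatomic α]
    [WellFoundedLT α] [LinearOrder β] [SuccOrder β] {f : α → β}
    (hf : ∀ ⦃a b⦄, a ⋖ b → f b ≤ Order.succ (f a)) {a b : α} (hab : a ≤ b) {g : β}
    (hag : f a ≤ g) (hgb : g ≤ f b) : ∃ c, f c = g ∧ a ≤ c ∧ c ≤ b := by
  obtain ⟨c, hcb, ⟨hac, hgc⟩, hmin⟩ :=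
    exists_minimal_le_of_wellFoundedLT (fun c => a ≤ c ∧ g ≤ f c) b ⟨hab, hgb⟩
  refine ⟨c, hgc.antisymm' (not_lt.1 fun hlt => ?_), hac, hcb⟩
  have hne : a ≠ c := fun h => (h ▸ hag).not_gt hlt
  obtain ⟨d, had, hdc⟩ := exists_le_covBy_of_lt (hac.lt_of_ne hne)
  have hgd : g ≤ f d :=
    not_lt.1 fun hdg => ((hf hdc).trans (Order.succ_le_of_lt hdg)).not_gt hlt
  exact hdc.lt.not_ge (hmin ⟨had, hgd⟩ hdc.le)

section ExactNim

variable {n k m : ℕ} {v w v₁ w₁ : Fin n → ℕ}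

namespace ExactMove

theorem of_between {z : Fin n → ℕ} (h₁ : ExactMove n k w w₁) (h₂ : ExactMove n k w v₁)
    (hv : v₁ ≤ z) (hw : z ≤ w₁) : ExactMove n k w z := by
  refine ⟨fun i => (hw i).trans (h₁.1 i), le_antisymm ?_ ?_⟩
  · rw [← h₂.2]
    exact Finset.card_le_card
      (Finset.monotone_filter_right _ fun i _ hi => (hv i).trans_lt hi)
  · rw [← h₁.2]
    exact Finset.card_le_card
      (Finset.monotone_filter_right _ fun i _ hi => (hw i).trans_lt hi)

theorem of_lt_iff_lt (h : ExactMove n k w w₁) (hle : v₁ ≤ v)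
    (hlt : ∀ i, v₁ i < v i ↔ w₁ i < w i) : ExactMove n k v v₁ :=
  ⟨hle, by simpa only [hlt] using h.2⟩

theorem lt_s8 (h : ExactMove n k w w₁) (hk : 0 < k) : w₁ < w := by
  obtain ⟨i, hi⟩ := Finset.card_pos.1 (hk.trans_eq h.2.symm)
  exact Pi.lt_def.2 ⟨h.1, i, (Finset.mem_filter.1 hi).2⟩

end ExactMove

namespace HasChain

theorem zero (v : Fin n → ℕ) : HasChain n k v 0 :=
  ⟨fun _ => v, rfl, fun i => i.elim0⟩

theorem succ_iff : HasChain n k v (m + 1) ↔ ∃ v₁, ExactMove n k v v₁ ∧ HasChain n k v₁ m := by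
  constructor
  · rintro ⟨f, rfl, hf⟩
    exact ⟨f 1, hf 0, fun i => f i.succ, rfl, fun i => hf i.succ⟩
  · rintro ⟨v₁, hv, f, rfl, hf⟩
    exact ⟨Fin.cons v f, rfl, Fin.cases hv hf⟩

theorem mono_s8 (h : HasChain n k v m) (hvw : v ≤ w) : HasChain n k w m := by
  induction m generalizing v w with
  | zero => exact zero w
  | succ m ih =>
    obtain ⟨v₁, hv, hc⟩ := succ_iff.1 h
    have hw : ExactMove n k w (w - (v - v₁)) := by
      refine hv.of_lt_iff_lt tsub_le_self fun i => ?_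
      have : v i ≤ w i := hvw i
      simp only [Pi.sub_apply]
      omega
    have hle : v₁ ≤ w - (v - v₁) := fun i => by
      have : v i ≤ w i := hvw i
      have : v₁ i ≤ v i := hv.1 i
      simp only [Pi.sub_apply]
      omega
    exact succ_iff.2 ⟨_, hw, ih hc hle⟩

theorem of_covBy (h : HasChain n k w (m + 1)) (hvw : v ⋖ w) : HasChain n k v m := by
  induction m generalizing v w with
  | zero => exact zero v
  | succ m ih =>
    obtain ⟨w₁, hw, hc⟩ := succ_iff.1 h
    obtain ⟨i, hi, hne⟩ := Pi.covBy_iff.1 hvw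
    rcases (hw.1 i).lt_or_eq with htouched | huntouched
    · refine hc.mono_s8 fun j => ?_
      rcases eq_or_ne j i with rfl | hj
      · exact hi.le_of_lt htouched
      · exact (hw.1 j).trans_eq (hne j hj).symm
    · have hv : ExactMove n k v (w₁ ⊓ v) := by
        refine hw.of_lt_iff_lt inf_le_right fun j => ?_
        rcases eq_or_ne j i with rfl | hj
        · simp [huntouched, hi.le]
        · simp [hne j hj]
      have hcov : w₁ ⊓ v ⋖ w₁ := by
        refine Pi.covBy_iff.2 ⟨i, ?_, fun j hj => ?_⟩
        · rwa [Pi.inf_apply, huntouched, inf_eq_right.2 hi.le]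
        · simpa [hne j hj] using hw.1 j
      exact succ_iff.2 ⟨_, hv, ih hc hcov⟩

theorem le_sum (h : HasChain n k v m) (hk : 0 < k) : m ≤ ∑ i, v i := by
  induction m generalizing v with
  | zero => exact Nat.zero_le _
  | succ m ih =>
    obtain ⟨v₁, hv, hc⟩ := succ_iff.1 h
    exact (ih hc).trans_lt (Fintype.sum_strictMono (hv.lt_s8 hk))

theorem bddAbove (hk : 0 < k) (v : Fin n → ℕ) : BddAbove {m | HasChain n k v m} :=
  ⟨∑ i, v i, fun _ h => h.le_sum hk⟩

theorem le_tetris (h : HasChain n k v m) (hk : 0 < k) : m ≤ tetris n k v :=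
  le_csSup (bddAbove hk v) h

end HasChain

theorem hasChain_tetris (hk : 0 < k) (v : Fin n → ℕ) : HasChain n k v (tetris n k v) :=
  Nat.sSup_mem ⟨0, HasChain.zero v⟩ (HasChain.bddAbove hk v)

theorem tetris_mono (hk : 0 < k) : Monotone (tetris n k) := fun v _ hvw =>
  ((hasChain_tetris hk v).mono_s8 hvw).le_tetris hk

theorem tetris_le_add_one_of_covBy (hk : 0 < k) (hvw : v ⋖ w) :
    tetris n k w ≤ tetris n k v + 1 := by
  have hchain := hasChain_tetris hk w
  cases hw : tetris n k w with
  | zero => exact Nat.zero_le _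
  | succ t =>
    rw [hw] at hchain
    exact Nat.succ_le_succ ((hchain.of_covBy hvw).le_tetris hk)

theorem mval_le (v : Fin n → ℕ) (i : Fin n) : mval n v ≤ v i :=
  Nat.sInf_le ⟨i, rfl⟩

theorem mval_mono : Monotone (mval n) := fun _ _ hvw =>
  ciInf_mono (OrderBot.bddBelow _) hvw

theorem yval_le_add_one_of_covBy (hk : 0 < k) (hvw : v ⋖ w) :
    yval n k w ≤ yval n k v + 1 := by
  obtain ⟨i, hi, hne⟩ := Pi.covBy_iff.1 hvw
  rw [Nat.covBy_iff_add_one_eq] at hi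
  rcases (mval_mono hvw.le).lt_or_eq with hlt | heq
  · have hle : (fun j => w j - mval n w) ≤ fun j => v j - mval n v := by
      intro j
      rcases eq_or_ne j i with rfl | hj
      · dsimp only
        omega
      · exact tsub_le_tsub (hne j hj).ge hlt.le
    exact (tetris_mono hk hle).trans (Nat.le_succ _)
  · have hcov : (fun j => v j - mval n v) ⋖ fun j => w j - mval n w := by
      refine Pi.covBy_iff.2 ⟨i, ?_, fun j hj => by rw [hne j hj, heq]⟩
      rw [Nat.covBy_iff_add_one_eq, ← heq, ← hi]
      exact (Nat.sub_add_comm (mval_le v i)).symm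
    exact tetris_le_add_one_of_covBy hk hcov

end ExactNim

theorem yval_intermediate_general (n k : ℕ) (hk : 0 < k) (x x' x'' : Fin n → ℕ)
    (h1 : ExactMove n k x x') (h2 : ExactMove n k x x'') (hle : ∀ i, x'' i ≤ x' i)
    (g : ℕ) (hg1 : yval n k x'' ≤ g) (hg2 : g ≤ yval n k x') :
    ∃ x''' : Fin n → ℕ, ExactMove n k x x''' ∧
      yval n k x''' = g ∧ (∀ i, x'' i ≤ x''' i) ∧ (∀ i, x''' i ≤ x' i) := by
  obtain ⟨z, hz, hlow, hhigh⟩ := exists_between_eq_of_covBy_le_succ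
    (fun _ _ => yval_le_add_one_of_covBy hk) hle hg1 hg2
  exact ⟨z, h1.of_between h2 hlow hhigh, hz, hlow, hhigh⟩

/-- Continuity lemma: given moves `x → x'` and `x → x''` with `x'' ≤ x'` and
`y(x'') ≤ y(x')`, every intermediate value `g` of `y` is attained by some move
`x → x'''` with `x'' ≤ x''' ≤ x'`. -/
theorem yval_intermediate (k : ℕ) (hk : 2 ≤ k) (x x' x'' : Fin (2 * k) → ℕ)
    (h1 : ExactMove (2 * k) k x x') (h2 : ExactMove (2 * k) k x x'')
    (hle : ∀ i, x'' i ≤ x' i)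
    (hy : yval (2 * k) k x'' ≤ yval (2 * k) k x')
    (g : ℕ) (hg1 : yval (2 * k) k x'' ≤ g) (hg2 : g ≤ yval (2 * k) k x') :
    ∃ x''' : Fin (2 * k) → ℕ, ExactMove (2 * k) k x x''' ∧
      yval (2 * k) k x''' = g ∧ (∀ i, x'' i ≤ x''' i) ∧ (∀ i, x''' i ≤ x' i) :=
  yval_intermediate_general (2 * k) k (by omega) x x' x'' h1 h2 hle g hg1 hg2
end

section
/- Let k ≥ 2 and let x be a position of Nim^=_{2k,k} with m(x) ≥ z(x). Then every pair (m, y) ∈ D(x) satisfies m ≥ binom(y+1,2) + 1, and the set of values {v(m, y) : (m, y) ∈ D(x)} equals the interval of integers [0, v(x)), i.e., {0, 1, …, v(x) − 1}. -/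
/-- `v(x) = (z(x) - 1) + ((m(x) - z(x)) mod (y(x)+1))`, computed in `ℤ`
(the integer `%` is the Euclidean mod, with values in `[0, y(x)]`). -/
noncomputable def vZ (n k : ℕ) (x : Fin n → ℕ) : ℤ :=
  ((zval n k x : ℤ) - 1) + ((mval n x - zval n k x : ℤ) % (yval n k x + 1))

/-- `D₁(x) = {(m, y) : 0 ≤ m ≤ m(x), m(x) - m ≤ y < y(x)}`. -/
noncomputable def D1 (n k : ℕ) (x : Fin n → ℕ) : Set (ℤ × ℤ) :=
  {p | 0 ≤ p.1 ∧ p.1 ≤ mval n x ∧ (mval n x : ℤ) - p.1 ≤ p.2 ∧ p.2 < yval n k x}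

/-- `D₂(x) = {(m, y) : m(x) - v(x) + z(x) - 1 ≤ m < m(x), y = y(x)}`. -/
noncomputable def D2 (n k : ℕ) (x : Fin n → ℕ) : Set (ℤ × ℤ) :=
  {p | (mval n x : ℤ) - vZ n k x + zval n k x - 1 ≤ p.1 ∧ p.1 < (mval n x : ℤ) ∧
    p.2 = (yval n k x : ℤ)}

/-- `D(x) = D₁(x) ∪ D₂(x)`. -/
noncomputable def DD (n k : ℕ) (x : Fin n → ℕ) : Set (ℤ × ℤ) := D1 n k x ∪ D2 n k x

/-- `C(y+1, 2)` for an integer `y`. -/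
def binomZ (y : ℤ) : ℤ := y * (y + 1) / 2

/-- `v(m, y) = C(y+1,2) + ((m - 1 - C(y+1,2)) mod (y+1))`. -/
def vpair (m y : ℤ) : ℤ := binomZ y + (m - 1 - binomZ y) % (y + 1)

/-! For `y ≥ 0` the map `m ↦ v(m, y)` is periodic with period `y + 1`, and it carries each window of
`y + 1` consecutive integers onto the block `[C(y+1,2), C(y+2,2))`. These blocks tile `[0, ∞)`. For
`y < y(x)`, the row `y` of `D(x)` is the window `[m(x) - y, m(x)]`, so these rows produce exactly
`[0, C(y(x)+1,2))`. On the row `y = y(x)`, the window starts where the remainder is `0` and stops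
just before `m(x)`, so it produces the rest, `[C(y(x)+1,2), v(x))`. -/

theorem binomZ_natCast (y : ℕ) : binomZ y = ((y + 1).choose 2 : ℕ) := by
  rw [binomZ, Nat.choose_two_right, Nat.add_sub_cancel]
  push_cast
  rw [mul_comm]

theorem binomZ_add_one (y : ℤ) : binomZ (y + 1) = binomZ y + (y + 1) := by
  rw [binomZ, binomZ, show (y + 1) * (y + 1 + 1) = y * (y + 1) + (y + 1) * 2 by ring,
    Int.add_mul_ediv_right _ _ two_ne_zero]

theorem binomZ_monotoneOn : MonotoneOn binomZ (Set.Ici 0) := by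
  refine monotoneOn_of_le_add_one Set.ordConnected_Ici fun y _ hy _ => ?_
  rw [Set.mem_Ici] at hy
  rw [binomZ_add_one]
  lia

theorem binomZ_nonneg {y : ℤ} (hy : 0 ≤ y) : 0 ≤ binomZ y :=
  binomZ_monotoneOn Set.self_mem_Ici hy hy

theorem le_binomZ {y : ℤ} (hy : 0 ≤ y) : y ≤ binomZ y := by
  obtain rfl | hy := hy.eq_or_lt
  · exact binomZ_nonneg le_rfl
  · have h := binomZ_add_one (y - 1)
    rw [sub_add_cancel] at h
    linarith [binomZ_nonneg (Int.le_sub_one_of_lt hy)]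

theorem exists_mem_Ico_binomZ {w : ℤ} (hw : 0 ≤ w) :
    ∃ y ≥ 0, w ∈ Set.Ico (binomZ y) (binomZ (y + 1)) := by
  have hunbdd : ¬BddAbove (binomZ '' Set.Ici 0) := by
    rintro ⟨b, hb⟩
    have h0 : 0 ≤ |b| + 1 := by positivity
    linarith [hb (Set.mem_image_of_mem binomZ h0), le_binomZ h0, le_abs_self b]
  have htile := biUnion_Ici_Ico_map_succ (fun _ => binomZ_nonneg) hunbdd
  obtain ⟨y, hy, hwy⟩ := Set.mem_iUnion₂.1 (htile.ge hw)
  exact ⟨y, hy, hwy⟩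

theorem image_vpair_Ico {y : ℤ} (hy : 0 ≤ y) (a : ℤ) :
    (vpair · y) '' Set.Ico a (a + (y + 1)) = Set.Ico (binomZ y) (binomZ (y + 1)) := by
  have hmod (b : ℤ) : (· % (y + 1)) '' Set.Ico b (b + (y + 1)) = Set.Ico 0 (y + 1) := by
    simpa using congrArg ((↑) : Finset ℤ → Set ℤ) (Int.image_Ico_emod b (y + 1) (by lia))
  calc (vpair · y) '' Set.Ico a (a + (y + 1))
      = (binomZ y + ·) '' ((· % (y + 1)) ''
          ((· - (1 + binomZ y)) '' Set.Ico a (a + (y + 1)))) := by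
        simp only [Set.image_image, vpair, sub_sub]
    _ = Set.Ico (binomZ y) (binomZ (y + 1)) := by
        rw [Set.image_sub_const_Ico, add_sub_right_comm, hmod, Set.image_const_add_Ico, add_zero,
          binomZ_add_one]

theorem vpair_mem_Ico {y : ℤ} (hy : 0 ≤ y) (m : ℤ) :
    vpair m y ∈ Set.Ico (binomZ y) (binomZ (y + 1)) := by
  rw [← image_vpair_Ico hy m]
  exact Set.mem_image_of_mem (vpair · y) (Set.left_mem_Ico.2 (by lia))

theorem vpair_lt {m y : ℤ} (hy : 0 ≤ y) (hm : binomZ y < m) : vpair m y < m := by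
  have hmod : (m - 1 - binomZ y) % (y + 1) ≤ m - 1 - binomZ y := by
    have hdiv : 0 ≤ (m - 1 - binomZ y) / (y + 1) := Int.ediv_nonneg (by lia) (by lia)
    rw [Int.emod_def]
    exact sub_le_self _ (by positivity)
  rw [vpair]
  lia

theorem vpair_sub {m y d : ℤ} (hy : 0 ≤ y) (hd : 0 ≤ d) (hdm : d ≤ vpair m y - binomZ y) :
    vpair (m - d) y = vpair m y - d := by
  have hlt := (vpair_mem_Ico hy m).2
  rw [binomZ_add_one] at hlt
  have hmod : (m - d - 1 - binomZ y) % (y + 1) = (m - 1 - binomZ y) % (y + 1) - d := by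
    rw [show m - d - 1 - binomZ y = m - 1 - binomZ y - d by ring, ← Int.emod_sub_emod]
    rw [vpair] at hdm hlt
    exact Int.emod_eq_of_lt (by lia) (by lia)
  rw [vpair, vpair, hmod, add_sub_assoc]

/-- `D₁(x)`, whose rows `y` lie below `y(x)`, as a function of `M = m(x)` and `Y = y(x)`; here `M`
and `Y` may be any integers. -/
def lowerRows (M Y : ℤ) : Set (ℤ × ℤ) :=
  {p | 0 ≤ p.1 ∧ p.1 ≤ M ∧ M - p.1 ≤ p.2 ∧ p.2 < Y}

/-- `D₂(x)`, which lies in the row `y = y(x)`, as a function of `M = m(x)` and `Y = y(x)`; here `M`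
and `Y` may be any integers. Its lower bound on `m` uses `v(x) = v(M, Y)` and
`z(x) - 1 = C(Y+1,2)`. -/
def topRow (M Y : ℤ) : Set (ℤ × ℤ) :=
  Set.Ico (M - (vpair M Y - binomZ Y)) M ×ˢ {Y}

theorem binomZ_lt_of_mem_lowerRows {M Y : ℤ} (hM : binomZ Y < M) {p : ℤ × ℤ}
    (hp : p ∈ lowerRows M Y) : binomZ p.2 < p.1 := by
  obtain ⟨-, hpM, hMp, hpY⟩ := hp
  have hmono : binomZ (p.2 + 1) ≤ binomZ Y :=
    binomZ_monotoneOn (Set.mem_Ici.2 (by lia)) (Set.mem_Ici.2 (by lia)) hpY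
  rw [binomZ_add_one] at hmono
  lia

theorem binomZ_lt_of_mem_topRow {M Y : ℤ} (hY : 0 ≤ Y) (hM : binomZ Y < M) {p : ℤ × ℤ}
    (hp : p ∈ topRow M Y) : binomZ p.2 < p.1 := by
  obtain ⟨⟨hMp, -⟩, hpY⟩ := hp
  rw [Set.mem_singleton_iff.1 hpY]
  linarith [vpair_lt hY hM]

theorem image_vpair_lowerRows {M Y : ℤ} (hY : 0 ≤ Y) (hM : Y ≤ M) :
    (fun p : ℤ × ℤ => vpair p.1 p.2) '' lowerRows M Y = Set.Ico 0 (binomZ Y) := by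
  ext w
  constructor
  · rintro ⟨⟨m, y⟩, ⟨-, hmM, hMm, hyY⟩, rfl⟩
    have hy : 0 ≤ y := by lia
    obtain ⟨hle, hlt⟩ := vpair_mem_Ico hy m
    exact ⟨(binomZ_nonneg hy).trans hle, hlt.trans_le <|
      binomZ_monotoneOn (Set.mem_Ici.2 (by lia)) (Set.mem_Ici.2 (by lia)) hyY⟩
  · rintro ⟨hw, hwY⟩
    obtain ⟨y, hy, hwy⟩ := exists_mem_Ico_binomZ hw
    have hyY : y < Y := binomZ_monotoneOn.reflect_lt hy hY (hwy.1.trans_lt hwY)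
    rw [← image_vpair_Ico hy (M - y)] at hwy
    obtain ⟨m, ⟨hMm, hmM⟩, rfl⟩ := hwy
    exact ⟨(m, y), ⟨by lia, by lia, by lia, hyY⟩, rfl⟩

theorem image_vpair_topRow {M Y : ℤ} (hY : 0 ≤ Y) :
    (fun p : ℤ × ℤ => vpair p.1 p.2) '' topRow M Y = Set.Ico (binomZ Y) (vpair M Y) := by
  calc (fun p : ℤ × ℤ => vpair p.1 p.2) '' topRow M Y
      = (vpair · Y) '' Set.Ico (M - (vpair M Y - binomZ Y)) M := by
        rw [topRow, Set.prod_singleton, Set.image_image]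
    _ = (· + (vpair M Y - M)) '' Set.Ico (M - (vpair M Y - binomZ Y)) M := by
        refine Set.image_congr fun m ⟨hMm, hmM⟩ => ?_
        have h := vpair_sub hY (m := M) (d := M - m) (by lia) (by lia)
        rw [sub_sub_cancel] at h
        rw [h]
        ring
    _ = Set.Ico (binomZ Y) (vpair M Y) := by
        rw [Set.image_add_const_Ico]
        ring_nf

theorem vpair_image_of_D_general {M Y : ℤ} (hY : 0 ≤ Y) (hM : binomZ Y < M) :
    (∀ p ∈ lowerRows M Y ∪ topRow M Y, binomZ p.2 + 1 ≤ p.1) ∧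
    (fun p : ℤ × ℤ => vpair p.1 p.2) '' (lowerRows M Y ∪ topRow M Y) =
      Set.Ico 0 (vpair M Y) := by
  constructor
  · rintro p (hp | hp)
    · exact binomZ_lt_of_mem_lowerRows hM hp
    · exact binomZ_lt_of_mem_topRow hY hM hp
  · have hYM : Y ≤ M := (le_binomZ hY).trans hM.le
    rw [Set.image_union, image_vpair_lowerRows hY hYM, image_vpair_topRow hY,
      Set.Ico_union_Ico_eq_Ico (binomZ_nonneg hY) (vpair_mem_Ico hY M).1]

theorem zval_eq_binomZ (n k : ℕ) (x : Fin n → ℕ) :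
    (zval n k x : ℤ) = 1 + binomZ (yval n k x) := by
  rw [zval, binomZ_natCast, Nat.cast_add, Nat.cast_one]

theorem vZ_eq_vpair (n k : ℕ) (x : Fin n → ℕ) : vZ n k x = vpair (mval n x) (yval n k x) := by
  rw [vZ, vpair, zval_eq_binomZ, add_sub_cancel_left, sub_sub]

theorem DD_eq_lowerRows_union_topRow (n k : ℕ) (x : Fin n → ℕ) :
    DD n k x = lowerRows (mval n x) (yval n k x) ∪ topRow (mval n x) (yval n k x) := by
  have hD2 : D2 n k x = topRow (mval n x) (yval n k x) := by
    ext p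
    simp only [D2, topRow, vZ_eq_vpair, zval_eq_binomZ, Set.mem_ofPred_eq, Set.mem_prod,
      Set.mem_Ico, Set.mem_singleton_iff]
    lia
  rw [DD, hD2]
  rfl

/-- If `m(x) ≥ z(x)`, every `(m, y) ∈ D(x)` satisfies `m ≥ C(y+1,2) + 1`, and
`{v(m, y) : (m, y) ∈ D(x)}` is exactly the integer interval `[0, v(x))`. -/
theorem vpair_image_of_D (k : ℕ) (hk : 2 ≤ k) (x : Fin (2 * k) → ℕ)
    (hx : zval (2 * k) k x ≤ mval (2 * k) x) :
    (∀ p ∈ DD (2 * k) k x, binomZ p.2 + 1 ≤ p.1) ∧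
    (fun p : ℤ × ℤ => vpair p.1 p.2) '' DD (2 * k) k x =
      Set.Ico (0 : ℤ) (vZ (2 * k) k x) := by
  have hM : binomZ (yval (2 * k) k x) < mval (2 * k) x := by
    have hz := zval_eq_binomZ (2 * k) k x
    lia
  rw [DD_eq_lowerRows_union_topRow, vZ_eq_vpair]
  exact vpair_image_of_D_general (Int.natCast_nonneg _) hM
end

section
/- For every position x of Moore's Nim Nim^≤_{n,k}, G(x) = 1 if and only if M(x) = 1. -/
/-- A move in Moore's Nim `Nim^≤_{n,k}`: all piles weakly decrease, at least one and
at most `k` piles strictly decrease. -/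
def MooreMove (n k : ℕ) (x x' : Fin n → ℕ) : Prop :=
  x' ≠ x ∧ (∀ i, x' i ≤ x i) ∧ (Finset.univ.filter fun i => x' i < x i).card ≤ k

/-- The Sprague–Grundy function of Moore's Nim, defined by the mex recursion. -/
noncomputable def mgrundy (n k : ℕ) (x : Fin n → ℕ) : ℕ :=
  sInf {g : ℕ | ∀ x' : Fin n → ℕ, MooreMove n k x x' → mgrundy n k x' ≠ g}
termination_by ∑ i, x i
decreasing_by
  rename_i hmv
  have hne := hmv.1
  have hle := hmv.2.1
  have hex : ∃ i, x' i < x i := by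
    by_contra hc
    push_neg at hc
    exact hne (funext fun i => le_antisymm (hle i) (hc i))
  obtain ⟨i, hi⟩ := hex
  exact Finset.sum_lt_sum (fun j _ => hle j) ⟨i, Finset.mem_univ i, hi⟩

/-- Moore's function `M(x) = Σ_j y_j (k+1)^j` where `y_j = (Σ_i x_{ij}) mod (k+1)`
and `x_{ij} = x_i / 2^j % 2` is the `j`-th binary digit of `x_i`. -/
noncomputable def mooreM (n k : ℕ) (x : Fin n → ℕ) : ℕ :=
  ∑ᶠ j : ℕ, ((∑ i, x i / 2 ^ j % 2) % (k + 1)) * (k + 1) ^ j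

/-!
The Sprague–Grundy function is characterised, below any threshold `B`, by the two mex conditions on
a function `f`: no move preserves `f`, and every value `b < B` below `f x` is reached by a move from
`x`. For `B = 2` Moore's function satisfies both.

Halving all piles drops the lowest base-`(k + 1)` digit of `M`. Hence a move preserving `M` changes,
by induction, at most the lowest bits; it then clears between `0` and `k` of them, and this number
is divisible by `k + 1`.

Conversely, let `z ≤ x / 2` lower at most `k` piles, those in `S`. The lowest bits of the piles in
`S` are free, and further piles with lowest bit `1` may be lowered as long as at most `k` piles
change. Setting the lowest bits of all these candidates and then clearing at most `k` of them, those
in `S` first, gives any residue not exceeding the number of candidates. Starting from `M z = 0`,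
this reaches `M = 0` always, and `M = 1` unless `M x = 0`.
-/

namespace MooreNim

open Finset

section Mex

variable {n k : ℕ} {x x' : Fin n → ℕ}

theorem mgrundy_le {g : ℕ} (h : ∀ x', MooreMove n k x x' → mgrundy n k x' ≠ g) :
    mgrundy n k x ≤ g := by
  rw [mgrundy]
  exact Nat.sInf_le h

theorem mgrundy_ne_of_move (h : MooreMove n k x x') : mgrundy n k x' ≠ mgrundy n k x := by
  have avoided_nonempty : {g | ∀ x', MooreMove n k x x' → mgrundy n k x' ≠ g}.Nonempty := by
    obtain ⟨g, hg⟩ := ((Set.finite_Iic x).image (mgrundy n k)).infinite_compl.nonempty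
    exact ⟨g, fun x' hx' hg' => hg ⟨x', hx'.2.1, hg'⟩⟩
  rw [mgrundy.eq_1 n k x]
  exact Nat.sInf_mem avoided_nonempty x' h

theorem lt_of_mooreMove (h : MooreMove n k x x') : x' < x :=
  lt_of_le_of_ne h.2.1 h.1

theorem mgrundy_eq_iff_of_mex {f : (Fin n → ℕ) → ℕ} {B : ℕ}
    (f_ne : ∀ x x', MooreMove n k x x' → f x < B → f x' ≠ f x)
    (exists_f_eq : ∀ x, ∀ b < B, b < f x → ∃ x', MooreMove n k x x' ∧ f x' = b)
    (x : Fin n → ℕ) {b : ℕ} (hb : b < B) : mgrundy n k x = b ↔ f x = b := by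
  induction x using WellFoundedLT.induction generalizing b with
  | ind x ih =>
    have ih_move : ∀ x', MooreMove n k x x' → ∀ {b}, b < B → (mgrundy n k x' = b ↔ f x' = b) :=
      fun x' hx' => ih x' (lt_of_mooreMove hx')
    have mgrundy_ne_of_lt : ∀ g < B, g < f x → mgrundy n k x ≠ g := by
      rintro g hgB hgf rfl
      obtain ⟨x', hx', hf⟩ := exists_f_eq x _ hgB hgf
      exact mgrundy_ne_of_move hx' ((ih_move x' hx' hgB).2 hf)
    have mgrundy_le_of_lt : f x < B → mgrundy n k x ≤ f x := fun hf =>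
      mgrundy_le fun x' hx' hg => f_ne x x' hx' hf ((ih_move x' hx' hf).1 hg)
    constructor
    · rintro rfl
      by_contra hne
      rcases lt_or_gt_of_ne hne with hlt | hgt
      · exact hlt.not_ge (mgrundy_le_of_lt (hlt.trans hb))
      · exact mgrundy_ne_of_lt _ hb hgt rfl
    · rintro rfl
      by_contra hne
      have hlt : mgrundy n k x < f x := (mgrundy_le_of_lt hb).lt_of_ne hne
      exact mgrundy_ne_of_lt _ (hlt.trans hb) hlt rfl

end Mex

section LowestBits

variable {ι : Type*}

@[elab_as_elim]
theorem halving_induction [Finite ι] {P : (ι → ℕ) → Prop} (zero : P 0)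
    (half : ∀ x, P (x / 2) → P x) (x : ι → ℕ) : P x := by
  induction x using WellFoundedLT.induction with
  | ind x ih =>
    rcases eq_or_ne x 0 with rfl | hx
    · exact zero
    · obtain ⟨i, hi⟩ := Function.ne_iff.1 hx
      refine half x (ih _ (Pi.lt_def.2 ⟨fun i => Nat.div_le_self _ _, i, ?_⟩))
      exact Nat.div_lt_self (Nat.pos_of_ne_zero hi) one_lt_two

theorem exists_subset_card_eq_comparable {α : Type*} {s t : Finset α} (hst : s ⊆ t) {d : ℕ}
    (hd : d ≤ #t) : ∃ u ⊆ t, #u = d ∧ (u ⊆ s ∨ s ⊆ u) := by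
  rcases le_total d #s with h | h
  · obtain ⟨u, hus, hu⟩ := exists_subset_card_eq h
    exact ⟨u, hus.trans hst, hu, .inl hus⟩
  · obtain ⟨u, hsu, hut, hu⟩ := exists_subsuperset_card_eq hst h hd
    exact ⟨u, hut, hu, .inr hsu⟩

theorem exists_subset_card_modEq {α : Type*} [DecidableEq α] {s t : Finset α} (hst : s ⊆ t)
    {k r : ℕ} (hs : #s ≤ k) (hr : r ≤ #t) :
    ∃ u ⊆ t, #(s ∪ t \ u) ≤ k ∧ #u ≡ r [MOD k + 1] := by
  set d := (#t - r) % (k + 1)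
  have hdk : d ≤ k := Nat.lt_succ_iff.1 (Nat.mod_lt _ k.succ_pos)
  have hdr : d ≤ #t - r := Nat.mod_le _ _
  obtain ⟨v, hvt, hv, hvs⟩ := exists_subset_card_eq_comparable hst (hdr.trans (Nat.sub_le _ _))
  refine ⟨t \ v, sdiff_subset, ?_, ?_⟩
  · rw [Finset.sdiff_sdiff_eq_self hvt]
    rcases hvs with h | h
    · rwa [union_eq_left.2 h]
    · rwa [union_eq_right.2 h, hv]
  · rw [card_sdiff_of_subset hvt, hv]
    calc #t - d ≡ #t - (#t - r) [MOD k + 1] :=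
          (Nat.mod_modEq _ _).sub_left (hdr.trans (Nat.sub_le _ _)) (Nat.sub_le _ _)
      _ = r := Nat.sub_sub_self hr

variable [Fintype ι]

theorem sum_mod_two_eq_add_card_of_div_two_eq {x x' : ι → ℕ} (hle : x' ≤ x)
    (hdiv : x' / 2 = x / 2) : ∑ i, x i % 2 = ∑ i, x' i % 2 + #{i | x' i < x i} := by
  rw [card_filter, ← sum_add_distrib]
  refine sum_congr rfl fun i _ => ?_
  have hlei : x' i ≤ x i := hle i
  have hdivi : x' i / 2 = x i / 2 := congrFun hdiv i
  split_ifs <;> omega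

theorem exists_le_div_two_eq_and_sum_mod_two {x z : ι → ℕ} (hz : z ≤ x / 2) {k r : ℕ}
    (hk : #{i | z i < x i / 2} ≤ k) (hr : r ≤ #{i | z i < x i / 2 ∨ x i % 2 = 1}) :
    ∃ x' ≤ x, #{i | x' i < x i} ≤ k ∧ x' / 2 = z ∧ ∑ i, x' i % 2 ≡ r [MOD k + 1] := by
  classical
  have lowered_subset :
      ({i | z i < x i / 2} : Finset ι) ⊆ ({i | z i < x i / 2 ∨ x i % 2 = 1} : Finset ι) :=
    monotone_filter_right _ fun _ _ => .inl
  obtain ⟨u, hu, hcard, hmod⟩ := exists_subset_card_modEq lowered_subset hk hr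
  have hzx : ∀ i, z i ≤ x i / 2 := hz
  have lowered_or_odd : ∀ i ∈ u, z i < x i / 2 ∨ x i % 2 = 1 := fun i hi => (mem_filter.1 (hu hi)).2
  refine ⟨fun i => 2 * z i + if i ∈ u then 1 else 0, fun i => ?_, ?_, ?_, ?_⟩
  · have := hzx i
    by_cases hi : i ∈ u
    · have := lowered_or_odd i hi
      simp only [hi, if_true]
      omega
    · simp only [hi, if_false]
      omega
  · refine (card_le_card fun i hlt => ?_).trans hcard
    have lowered_or_cleared : z i < x i / 2 ∨ x i % 2 = 1 ∧ i ∉ u := by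
      replace hlt : 2 * z i + (if i ∈ u then 1 else 0) < x i := (mem_filter.1 hlt).2
      have := hzx i
      by_cases hi : i ∈ u
      · have := lowered_or_odd i hi
        simp only [hi, if_true] at hlt
        omega
      · simp only [hi, if_false, not_false_eq_true, and_true] at hlt ⊢
        omega
    simp only [mem_filter_univ, mem_union, mem_sdiff]
    exact lowered_or_cleared.imp_right fun h => ⟨.inr h.1, h.2⟩
  · funext i
    simp only [Pi.div_apply, Pi.ofNat_apply]
    split_ifs <;> omega
  · have hsum : ∑ i, (2 * z i + if i ∈ u then 1 else 0) % 2 = #u :=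
      calc
        _ = ∑ i, if i ∈ u then 1 else 0 :=
          sum_congr rfl fun i _ => by split_ifs <;> omega
        _ = #u := by simp
    rwa [hsum]

end LowestBits

section MooreFunction

variable {n k : ℕ} {x x' : Fin n → ℕ}

theorem mooreM_eq_sum_range {N : ℕ} (hN : ∀ i, x i < 2 ^ N) :
    mooreM n k x = ∑ j ∈ range N, (∑ i, x i / 2 ^ j % 2) % (k + 1) * (k + 1) ^ j := by
  refine finsum_eq_sum_of_support_subset _ fun j hj => ?_
  by_contra hjN
  have hNj : N ≤ j := by simpa using hjN
  have hdiv : ∀ i, x i / 2 ^ j = 0 := fun i =>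
    Nat.div_eq_of_lt ((hN i).trans_le (Nat.pow_le_pow_right two_pos hNj))
  simp [hdiv] at hj

theorem mooreM_eq_add (n k : ℕ) (x : Fin n → ℕ) :
    mooreM n k x = (∑ i, x i % 2) % (k + 1) + (k + 1) * mooreM n k (x / 2) := by
  obtain ⟨N, hN⟩ : ∃ N, ∀ i, x i < 2 ^ (N + 1) :=
    ⟨∑ i, x i, fun i => (single_le_sum_of_canonicallyOrdered (mem_univ i)).trans_lt
      (Nat.lt_two_pow_self.trans (Nat.pow_lt_pow_succ one_lt_two))⟩
  have hN' : ∀ i, (x / 2) i < 2 ^ N := fun i =>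
    Nat.div_lt_of_lt_mul ((hN i).trans_eq (pow_succ' 2 N))
  rw [mooreM_eq_sum_range hN, mooreM_eq_sum_range hN', sum_range_succ', mul_sum, add_comm]
  congr 1
  · simp
  · refine sum_congr rfl fun j _ => ?_
    simp only [Pi.div_apply, Pi.ofNat_apply, Nat.div_div_eq_div_mul, ← pow_succ']
    ring

theorem mooreM_mod (n k : ℕ) (x : Fin n → ℕ) :
    mooreM n k x % (k + 1) = (∑ i, x i % 2) % (k + 1) := by
  rw [mooreM_eq_add, Nat.add_mul_mod_self_left, Nat.mod_mod]

theorem mooreM_div (n k : ℕ) (x : Fin n → ℕ) : mooreM n k x / (k + 1) = mooreM n k (x / 2) := by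
  rw [mooreM_eq_add, Nat.add_mul_div_left _ _ k.succ_pos,
    Nat.div_eq_of_lt (Nat.mod_lt _ k.succ_pos), zero_add]

theorem eq_of_mooreM_eq (hle : x' ≤ x) (hcard : #{i | x' i < x i} ≤ k)
    (hM : mooreM n k x' = mooreM n k x) : x' = x := by
  induction x using halving_induction generalizing x' with
  | zero => exact le_zero_iff.1 hle
  | half x ih =>
    have hdiv : x' / 2 = x / 2 := by
      refine ih (fun i => Nat.div_le_div_right (hle i)) (le_trans (card_le_card ?_) hcard) ?_
      · exact monotone_filter_right _ fun i _ hi =>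
          lt_of_not_ge fun h => hi.not_ge (Nat.div_le_div_right h)
      · rw [← mooreM_div, ← mooreM_div, hM]
    have hdvd : k + 1 ∣ #{i | x' i < x i} := by
      have hmod : ∑ i, x' i % 2 ≡ ∑ i, x' i % 2 + #{i | x' i < x i} [MOD k + 1] := by
        rw [← sum_mod_two_eq_add_card_of_div_two_eq hle hdiv, Nat.ModEq, ← mooreM_mod,
          ← mooreM_mod, hM]
      exact Nat.add_modEq_left_iff.1 hmod.symm
    have hempty : ({i | x' i < x i} : Finset (Fin n)) = ∅ :=
      card_eq_zero.1 (Nat.eq_zero_of_dvd_of_lt hdvd (Nat.lt_succ_of_le hcard))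
    refine le_antisymm hle fun i => not_lt.1 ?_
    simpa using filter_eq_empty_iff.1 hempty (mem_univ i)

theorem mooreM_ne_of_move (h : MooreMove n k x x') : mooreM n k x' ≠ mooreM n k x :=
  fun hM => h.1 (eq_of_mooreM_eq h.2.1 h.2.2 hM)

theorem exists_le_mooreM_eq_zero (n k : ℕ) (x : Fin n → ℕ) :
    ∃ x' ≤ x, #{i | x' i < x i} ≤ k ∧ mooreM n k x' = 0 := by
  induction x using halving_induction with
  | zero => exact ⟨0, le_rfl, by simp, by simp [mooreM]⟩
  | half x ih =>
    obtain ⟨z, hz, hcard, hMz⟩ := ih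
    obtain ⟨x', hx', hcard', rfl, hmod⟩ :=
      exists_le_div_two_eq_and_sum_mod_two hz hcard (Nat.zero_le _)
    refine ⟨x', hx', hcard', ?_⟩
    rw [mooreM_eq_add, hMz, hmod, Nat.zero_mod, mul_zero, add_zero]

theorem exists_le_mooreM_eq_one (hx : mooreM n k x ≠ 0) :
    ∃ x' ≤ x, #{i | x' i < x i} ≤ k ∧ mooreM n k x' = 1 := by
  have hk : k ≠ 0 := by
    rintro rfl
    exact hx (by simp [mooreM, Nat.mod_one])
  obtain ⟨z, hz, hcard, hMz⟩ := exists_le_mooreM_eq_zero n k (x / 2)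
  have hcandidates : 1 ≤ #{i | z i < x i / 2 ∨ x i % 2 = 1} := by
    by_contra! hlt
    have hnone : ∀ i, ¬(z i < x i / 2 ∨ x i % 2 = 1) := by
      simpa [filter_eq_empty_iff] using hlt
    have hzx : z = x / 2 := le_antisymm hz fun i => not_lt.1 fun hi => hnone i (.inl hi)
    have heven : ∀ i, x i % 2 = 0 := fun i =>
      Nat.mod_two_ne_one.1 fun hi => hnone i (.inr hi)
    apply hx
    rw [mooreM_eq_add, ← hzx, hMz]
    simp [heven]
  obtain ⟨x', hx', hcard', rfl, hmod⟩ :=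
    exists_le_div_two_eq_and_sum_mod_two hz hcard hcandidates
  refine ⟨x', hx', hcard', ?_⟩
  rw [mooreM_eq_add, hMz, hmod, Nat.mod_eq_of_lt (by omega), mul_zero, add_zero]

theorem exists_move_mooreM_eq {b : ℕ} (hb : b < 2) (hbx : b < mooreM n k x) :
    ∃ x', MooreMove n k x x' ∧ mooreM n k x' = b := by
  obtain ⟨x', hle, hcard, hM⟩ : ∃ x' ≤ x, #{i | x' i < x i} ≤ k ∧ mooreM n k x' = b := by
    interval_cases b
    · exact exists_le_mooreM_eq_zero n k x
    · exact exists_le_mooreM_eq_one (Nat.ne_zero_of_lt hbx)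
  have hne : x' ≠ x := by
    rintro rfl
    exact hbx.ne' hM
  exact ⟨x', ⟨hne, hle, hcard⟩, hM⟩

end MooreFunction

end MooreNim

theorem moore_grundy_one_iff_general (n k : ℕ) (x : Fin n → ℕ) {b : ℕ} (hb : b < 2) :
    mgrundy n k x = b ↔ mooreM n k x = b :=
  MooreNim.mgrundy_eq_iff_of_mex (fun _ _ hx' _ => MooreNim.mooreM_ne_of_move hx')
    (fun _ _ => MooreNim.exists_move_mooreM_eq) x hb

/-- A position of Moore's Nim `Nim^≤_{n,k}` has Sprague–Grundy value 1 iff `M(x) = 1`. -/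
theorem moore_grundy_one_iff (n k : ℕ) (hk1 : 1 ≤ k) (hkn : k ≤ n)
    (x : Fin n → ℕ) :
    mgrundy n k x = 1 ↔ mooreM n k x = 1 :=
  moore_grundy_one_iff_general n k x one_lt_two
end
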